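/- arXiv:math/0103073 — 6 statements merged into one kernel-verified Lean document; each statement's English description precedes it below -/
import Mathlib

section
/- Let n ≥ 1 and let M be a noncompact connected topological n-manifold equipped with a metric d that induces its topology and in which all closed bounded subsets are compact, with basepoint ⋆, and let ρ : M → ℝ be defined by ρ(m) = d(m, ⋆). Suppose there exists R > 0 such that for every r > R and every connected component C of the closed annulus {m ∈ M : r ≤ ρ(m) ≤ 4r}, there exist a spherical space form N and a homeomorphism e : C → [r, 4r] × N whose first coordinate function equals the restriction of ρ to C. Then there exist a finite index set K, spherical space forms (N_k)_{k ∈ K}, and a homeomorphism h from {m ∈ M : ρ(m) > R + 1} onto (R + 1, ∞) × (⨆_{k ∈ K} N_k) whose first coordinate function equals ρ; in particular, the complement in M of a closed ball around ⋆ is homeomorphic to the product of an open half-line with a finite disjoint union of spherical space forms. -/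
/-!
Write `A(r)` for the closed annulus `r ≤ ρ ≤ 4r`. Each component of `A(r)` is a product over the
interval `[r, 4r]`, so it meets the compact level set `ρ = 2r`, on which the components of `A(r)`
are relatively open because `M` is locally connected. Hence `A(r)` has only finitely many
components (`finite_components`), and the product structures on them assemble to a retraction
`A(r) → {ρ = r}` that is a bijection on every level set (`exists_annulus_retraction`).

Composing these retractions for the abutting annuli `A(4 ^ i * (R + 1))` gives a retraction
`{ρ ≥ R + 1} → {ρ = R + 1}` with the same property (`exists_end_retraction`). Paired with `ρ`, it is
a continuous bijection onto a product. Since `ρ` is proper, so is this pairing, and it is therefore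
a homeomorphism (`exists_homeomorph_prod`). Finally, the level set `ρ = R + 1` is the disjoint union
of its intersections with the finitely many components of `A(R + 1)`, each of which is a spherical
space form (`exists_homeomorph_level`).
-/

/-- The relation on the unit sphere of `ℝ^{k+1}` identifying points in the same orbit of
a subgroup `G` of the group of linear isometries (i.e. of `O(k+1)`). -/
def SphereOrbitRel (k : ℕ)
    (G : Subgroup (EuclideanSpace ℝ (Fin (k + 1)) ≃ₗᵢ[ℝ] EuclideanSpace ℝ (Fin (k + 1))))
    (x y : Metric.sphere (0 : EuclideanSpace ℝ (Fin (k + 1))) 1) : Prop :=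
  ∃ g ∈ G, g (x : EuclideanSpace ℝ (Fin (k + 1))) = (y : EuclideanSpace ℝ (Fin (k + 1)))

/-- The quotient of the unit sphere `S^k ⊆ ℝ^{k+1}` by the orbit relation of `G`. -/
abbrev SphereQuotient (k : ℕ)
    (G : Subgroup (EuclideanSpace ℝ (Fin (k + 1)) ≃ₗᵢ[ℝ] EuclideanSpace ℝ (Fin (k + 1)))) :
    Type :=
  Quot (SphereOrbitRel k G)

/-- `G` is a finite subgroup of `O(k+1)` acting freely on the unit sphere. -/
def IsSpaceFormGroup (k : ℕ)
    (G : Subgroup (EuclideanSpace ℝ (Fin (k + 1)) ≃ₗᵢ[ℝ] EuclideanSpace ℝ (Fin (k + 1)))) :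
    Prop :=
  Finite G ∧ ∀ g ∈ G, g ≠ 1 →
    ∀ x : EuclideanSpace ℝ (Fin (k + 1)), ‖x‖ = 1 → g x ≠ x

/-- A topological space is a spherical space form if it is homeomorphic to the quotient
of a unit sphere by a free action of a finite subgroup of the orthogonal group. -/
def IsSphericalSpaceForm (N : Type*) [TopologicalSpace N] : Prop :=
  ∃ (k : ℕ)
    (G : Subgroup (EuclideanSpace ℝ (Fin (k + 1)) ≃ₗᵢ[ℝ] EuclideanSpace ℝ (Fin (k + 1)))),
    IsSpaceFormGroup k G ∧ Nonempty (N ≃ₜ SphereQuotient k G)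

open Set Filter Topology

/-- A retraction `p` of `ρ ⁻¹' I` onto the level set `ρ = a` that restricts to a bijection on each
level set `ρ = t`, `t ∈ I`. The map is total, but only its values on `ρ ⁻¹' I` matter. When `ρ` is
proper and `M` is Hausdorff, it amounts to a product structure `ρ ⁻¹' I ≃ I × {ρ = a}` over `ρ`. -/
structure IsLevelRetraction {M : Type*} [TopologicalSpace M] (ρ : M → ℝ) (a : ℝ) (I : Set ℝ)
    (p : M → M) : Prop where
  continuousOn : ContinuousOn p (ρ ⁻¹' I)
  bijOn : ∀ t ∈ I, BijOn p (ρ ⁻¹' {t}) (ρ ⁻¹' {a})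
  fixed : ∀ x, ρ x = a → p x = x

/-- The connected components of a set `A`, as subsets of the ambient space. -/
def componentsIn {M : Type*} [TopologicalSpace M] (A : Set M) : Set (Set M) :=
  {C | ∃ m ∈ A, C = connectedComponentIn A m}

section

variable {M : Type*} [TopologicalSpace M]

/-! ### Components -/

theorem isClosed_of_mem_componentsIn {A C : Set M} (hA : IsClosed A) (hC : C ∈ componentsIn A) :
    IsClosed C := by
  obtain ⟨m, hm, rfl⟩ := hC
  refine isClosed_of_closure_subset ?_
  exact isPreconnected_connectedComponentIn.closure.subset_connectedComponentIn
    (subset_closure (mem_connectedComponentIn hm))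
    (closure_minimal (connectedComponentIn_subset A m) hA)

theorem eq_of_mem_componentsIn {A C : Set M} (hC : C ∈ componentsIn A) {x : M} (hx : x ∈ C) :
    C = connectedComponentIn A x := by
  obtain ⟨m, hm, rfl⟩ := hC
  exact connectedComponentIn_eq hx

theorem mem_componentsIn {A : Set M} {x : M} (hx : x ∈ A) :
    connectedComponentIn A x ∈ componentsIn A := ⟨x, hx, rfl⟩

/-- A set has finitely many components if all of them meet a compact set of which it is a
neighbourhood, since there the components are neighbourhoods of their points. -/
theorem finite_components [LocallyConnectedSpace M] {A L : Set M} (hL : IsCompact L)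
    (hLA : ∀ x ∈ L, A ∈ 𝓝 x) (hmeet : ∀ C ∈ componentsIn A, (C ∩ L).Nonempty) :
    (componentsIn A).Finite := by
  obtain ⟨t, -, hcov⟩ := hL.elim_nhds_subcover (fun x => connectedComponentIn A x)
    (fun x hx => connectedComponentIn_mem_nhds (hLA x hx))
  refine (t.finite_toSet.image (fun x => connectedComponentIn A x)).subset ?_
  intro C hC
  obtain ⟨x, hxC, hxL⟩ := hmeet C hC
  obtain ⟨y, hy, hxy⟩ := mem_iUnion₂.1 (hcov hxL)
  refine ⟨y, hy, ?_⟩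
  rw [eq_of_mem_componentsIn hC hxC]
  exact connectedComponentIn_eq hxy

/-! ### Retractions from product structures -/

/-- A product structure `C ≃ [a, b] × N` over `ρ` retracts `C` onto its bottom level,
by `(t, y) ↦ (a, y)`. -/
theorem exists_component_retraction {ρ : M → ℝ} {a b : ℝ} (hab : a ≤ b) {C : Set M} {N : Type*}
    [TopologicalSpace N] (e : C ≃ₜ Icc a b × N) (he : ∀ x : C, ((e x).1 : ℝ) = ρ x) :
    ∃ q : M → M, ContinuousOn q C ∧
      (∀ t ∈ Icc a b, BijOn q (C ∩ ρ ⁻¹' {t}) (C ∩ ρ ⁻¹' {a})) ∧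
      ∀ x ∈ C, ρ x = a → q x = x := by
  classical
  have ha : a ∈ Icc a b := ⟨le_rfl, hab⟩
  let q₀ : C → M := fun x => (e.symm (⟨a, ha⟩, (e x).2) : M)
  let q : M → M := fun x => if h : x ∈ C then q₀ ⟨x, h⟩ else x
  have hq : ∀ x : C, q x = q₀ x := fun x => by simp [q]
  have hes : ∀ z, ρ (e.symm z : M) = z.1 := fun z => by rw [← he, e.apply_symm_apply]
  refine ⟨q, ?_, ?_, ?_⟩
  · rw [continuousOn_iff_continuous_domRestrict]
    have : C.domRestrict q = q₀ := funext hq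
    rw [this]
    fun_prop
  · intro t ht
    refine ⟨?_, ?_, ?_⟩
    · rintro x ⟨hx, -⟩
      rw [hq ⟨x, hx⟩]
      exact ⟨Subtype.coe_prop _, hes _⟩
    · rintro x ⟨hx, hxt⟩ y ⟨hy, hyt⟩ hxy
      rw [hq ⟨x, hx⟩, hq ⟨y, hy⟩] at hxy
      have h1 := e.symm.injective (Subtype.ext hxy)
      have h2 : (e ⟨x, hx⟩) = e ⟨y, hy⟩ := by
        refine Prod.ext (Subtype.ext ?_) (Prod.ext_iff.1 h1).2
        rw [he, he]
        exact Eq.trans hxt (Eq.symm hyt)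
      exact congrArg Subtype.val (e.injective h2)
    · rintro y ⟨hy, hya⟩
      refine ⟨e.symm (⟨t, ht⟩, (e ⟨y, hy⟩).2), ⟨Subtype.coe_prop _, hes _⟩, ?_⟩
      rw [hq]
      have : e ⟨y, hy⟩ = (⟨a, ha⟩, (e ⟨y, hy⟩).2) :=
        Prod.ext (Subtype.ext ((he _).trans hya)) rfl
      simp only [q₀, e.apply_symm_apply]
      rw [← this, e.symm_apply_apply]
  · intro x hx hxa
    rw [hq ⟨x, hx⟩]
    have : e ⟨x, hx⟩ = (⟨a, ha⟩, (e ⟨x, hx⟩).2) :=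
      Prod.ext (Subtype.ext ((he _).trans hxa)) rfl
    simp only [q₀]
    rw [← this, e.symm_apply_apply]

theorem exists_annulus_retraction {ρ : M → ℝ} (hρ : Continuous ρ) {a b : ℝ}
    (hfin : (componentsIn (ρ ⁻¹' Icc a b)).Finite)
    (hq : ∀ C ∈ componentsIn (ρ ⁻¹' Icc a b), ∃ q : M → M, ContinuousOn q C ∧
      (∀ t ∈ Icc a b, BijOn q (C ∩ ρ ⁻¹' {t}) (C ∩ ρ ⁻¹' {a})) ∧
      ∀ x ∈ C, ρ x = a → q x = x) (hab : a ≤ b) :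
    ∃ q, IsLevelRetraction ρ a (Icc a b) q := by
  set A := ρ ⁻¹' Icc a b with hA
  have hAc : IsClosed A := isClosed_Icc.preimage hρ
  have hq' : ∀ C, ∃ q : M → M, C ∈ componentsIn A → ContinuousOn q C ∧
      (∀ t ∈ Icc a b, BijOn q (C ∩ ρ ⁻¹' {t}) (C ∩ ρ ⁻¹' {a})) ∧
      ∀ x ∈ C, ρ x = a → q x = x := by
    intro C
    by_cases hC : C ∈ componentsIn A
    · exact (hq C hC).imp fun q h _ => h
    · exact ⟨id, fun h => absurd h hC⟩
  choose f hf using hq'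
  have hfc := fun C hC => (hf C hC).1
  have hfb := fun C hC => (hf C hC).2.1
  have hff := fun C hC => (hf C hC).2.2
  have hlev : ∀ t ∈ Icc a b, ∀ x, ρ x = t → x ∈ A := by rintro t ht x rfl; exact ht
  have key : ∀ C ∈ componentsIn A, ∀ x ∈ C, f (connectedComponentIn A x) x = f C x := by
    intro C hC x hx
    rw [← eq_of_mem_componentsIn hC hx]
  refine ⟨fun x => f (connectedComponentIn A x) x, ?_, ?_, ?_⟩
  · have : Finite (componentsIn A) := hfin
    have h := (locallyFinite_of_finite (fun C : componentsIn A => (C : Set M))).continuousOn_iUnion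
      (g := fun x => f (connectedComponentIn A x) x)
      (fun C => isClosed_of_mem_componentsIn hAc C.2)
      (fun C => (hfc C C.2).congr (fun x hx => key C C.2 x hx))
    refine h.mono fun x hx => mem_iUnion.2 ⟨⟨_, mem_componentsIn hx⟩, mem_connectedComponentIn hx⟩
  · intro t ht
    have hm : ∀ x, ρ x = t → f (connectedComponentIn A x) x ∈ connectedComponentIn A x ∩ ρ ⁻¹' {a} :=
      fun x hx => (hfb _ (mem_componentsIn (hlev t ht x hx)) t ht).mapsTo
        ⟨mem_connectedComponentIn (hlev t ht x hx), hx⟩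
    refine ⟨fun x hx => (hm x hx).2, ?_, ?_⟩
    · intro x hx y hy hxy
      have hxA := hlev t ht x hx
      have hyA := hlev t ht y hy
      simp only at hxy
      have hcc : connectedComponentIn A x = connectedComponentIn A y := by
        have h1 := (hm x hx).1
        have h2 := (hm y hy).1
        rw [← hxy] at h2
        exact (connectedComponentIn_eq h1).trans (connectedComponentIn_eq h2).symm
      rw [hcc] at hxy
      exact (hfb _ (mem_componentsIn hyA) t ht).injOn
        ⟨hcc ▸ mem_connectedComponentIn hxA, hx⟩ ⟨mem_connectedComponentIn hyA, hy⟩ hxy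
    · intro y hy
      have hyA := hlev a ⟨le_rfl, hab⟩ y hy
      obtain ⟨x, ⟨hxC, hxt⟩, hx⟩ := (hfb _ (mem_componentsIn hyA) t ht).surjOn
        ⟨mem_connectedComponentIn hyA, hy⟩
      exact ⟨x, hxt, (key _ (mem_componentsIn hyA) x hxC).trans hx⟩
  · intro x hx
    have hxA := hlev a ⟨le_rfl, hab⟩ x hx
    exact hff _ (mem_componentsIn hxA) x (mem_connectedComponentIn hxA) hx

/-! ### Composing retractions -/

theorem IsLevelRetraction.glue {ρ : M → ℝ} (hρ : Continuous ρ) {a b c : ℝ} (hab : a ≤ b)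
    (hbc : b ≤ c) {p q : M → M} (hp : IsLevelRetraction ρ a (Icc a b) p)
    (hq : IsLevelRetraction ρ b (Icc b c) q) :
    IsLevelRetraction ρ a (Icc a c) (fun x => if ρ x ≤ b then p x else p (q x)) := by
  have heq : ∀ x, b ≤ ρ x → (if ρ x ≤ b then p x else p (q x)) = p (q x) := by
    intro x hx
    split_ifs with h
    · rw [hq.fixed x (le_antisymm h hx)]
    · rfl
  refine ⟨?_, ?_, ?_⟩
  · have h1 : ContinuousOn (fun x => if ρ x ≤ b then p x else p (q x)) (ρ ⁻¹' Icc a b) :=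
      hp.continuousOn.congr fun x hx => if_pos hx.2
    have h2 : ContinuousOn (fun x => if ρ x ≤ b then p x else p (q x)) (ρ ⁻¹' Icc b c) := by
      refine (hp.continuousOn.comp hq.continuousOn ?_).congr fun x hx => heq x hx.1
      intro x hx
      have : ρ (q x) = b := (hq.bijOn _ hx).mapsTo rfl
      exact ⟨this ▸ hab, this.le⟩
    have := h1.union_of_isClosed h2 (isClosed_Icc.preimage hρ) (isClosed_Icc.preimage hρ)
    rwa [← preimage_union, Icc_union_Icc_eq_Icc hab hbc] at this
  · intro t ht
    rcases le_total t b with h | h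
    · refine (hp.bijOn t ⟨ht.1, h⟩).congr fun x hx => ?_
      have hx : ρ x = t := hx
      simp [hx, h]
    · refine ((hp.bijOn b ⟨hab, le_rfl⟩).comp (hq.bijOn t ⟨h, ht.2⟩)).congr fun x hx => ?_
      have hx : ρ x = t := hx
      exact (heq x (hx ▸ h)).symm
  · intro x hx
    rw [if_pos (hx ▸ hab)]
    exact hp.fixed x hx

theorem exists_end_retraction {ρ : M → ℝ} (hρ : Continuous ρ) (a : ℕ → ℝ) (ha : Monotone a)
    (ha' : Tendsto a atTop atTop)
    (h : ∀ i, ∃ q, IsLevelRetraction ρ (a i) (Icc (a i) (a (i + 1))) q) :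
    ∃ p, IsLevelRetraction ρ (a 0) (Ici (a 0)) p := by
  choose q hq using h
  let P : ℕ → M → M := fun i => Nat.rec id
    (fun i Pi x => if ρ x ≤ a i then Pi x else Pi (q i x)) i
  have hPs : ∀ i x, P (i + 1) x = if ρ x ≤ a i then P i x else P i (q i x) := fun _ _ => rfl
  have hP : ∀ i, IsLevelRetraction ρ (a 0) (Icc (a 0) (a i)) (P i) := by
    intro i
    induction i with
    | zero =>
      refine ⟨continuousOn_id, fun t ht => ?_, fun _ _ => rfl⟩
      rw [Icc_self] at ht
      rw [mem_singleton_iff.1 ht]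
      exact bijOn_id _
    | succ i ih => exact ih.glue hρ (ha (Nat.zero_le i)) (ha (Nat.le_succ i)) (hq i)
  have hst : ∀ i j, i ≤ j → ∀ x, ρ x ≤ a i → P j x = P i x := by
    intro i j hij
    induction j, hij using Nat.le_induction with
    | base => exact fun _ _ => rfl
    | succ j hij ih =>
      intro x hx
      rw [hPs, if_pos (hx.trans (ha hij)), ih x hx]
  have hex : ∀ t : ℝ, ∃ i, t < a i := fun t => (ha'.eventually_gt_atTop t).exists
  choose N hN using hex
  have hpe : ∀ i x, ρ x ≤ a i → P (N (ρ x)) x = P i x := by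
    intro i x hx
    rcases le_total i (N (ρ x)) with h | h
    · exact hst _ _ h x hx
    · exact (hst _ _ h x (hN _).le).symm
  refine ⟨fun x => P (N (ρ x)) x, ?_, ?_, ?_⟩
  · intro x hx
    obtain ⟨i, hi⟩ : ∃ i, ρ x < a i := ⟨_, hN _⟩
    have hmem : ρ ⁻¹' Iio (a i) ∈ 𝓝 x := (isOpen_Iio.preimage hρ).mem_nhds hi
    have h1 : ContinuousWithinAt (P i) (ρ ⁻¹' Ici (a 0) ∩ ρ ⁻¹' Iio (a i)) x :=
      ((hP i).continuousOn x ⟨hx, hi.le⟩).mono fun y hy => ⟨hy.1, (mem_Iio.1 hy.2).le⟩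
    have h2 := h1.congr (g := fun x => P (N (ρ x)) x) (fun y hy => hpe i y (mem_Iio.1 hy.2).le)
      (hpe i x hi.le)
    exact (continuousWithinAt_inter hmem).1 h2
  · intro t ht
    refine ((hP (N t)).bijOn t ⟨ht, (hN t).le⟩).congr fun x hx => ?_
    have hx : ρ x = t := hx
    simp [hx]
  · intro x hx
    rw [hpe 0 x hx.le]
    rfl

/-- Properness of `ρ` passes to `x ↦ (ρ x, p x)`, so this continuous bijection is closed. -/
theorem exists_homeomorph_prod [T2Space M] {ρ : M → ℝ} (hρ : IsProperMap ρ) {a : ℝ} {p : M → M}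
    (hp : IsLevelRetraction ρ a (Ici a) p) :
    ∃ h : {x : M | a < ρ x} ≃ₜ Ioi a × (ρ ⁻¹' {a} : Set M), ∀ x, ((h x).1 : ℝ) = ρ x := by
  have hmaps : ∀ x, a < ρ x → p x ∈ ρ ⁻¹' {a} := fun x hx =>
    (hp.bijOn (ρ x) (mem_Ici.2 hx.le)).mapsTo rfl
  let f : {x : M | a < ρ x} → Ioi a × (ρ ⁻¹' {a} : Set M) :=
    fun x => (⟨ρ x, x.2⟩, ⟨p x, hmaps x x.2⟩)
  have hpc : Continuous fun x : {x : M | a < ρ x} => p x :=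
    continuousOn_iff_continuous_domRestrict.1
      (hp.continuousOn.mono (s := ρ ⁻¹' Ici a) (t := {x : M | a < ρ x})
        fun x (hx : a < ρ x) => hx.le)
  have hρc := hρ.continuous
  have hf : Continuous f := by
    refine Continuous.prodMk (Continuous.subtype_mk (by fun_prop) _)
      (Continuous.subtype_mk hpc _)
  have hprop : IsProperMap f :=
    isProperMap_of_comp_of_t2 hf continuous_fst (hρ.restrictPreimage (Ioi a))
  have hbij : Function.Bijective f := by
    constructor
    · intro x y hxy
      have h1 : ρ x = ρ y := congrArg (fun z => (z.1 : ℝ)) hxy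
      have h2 : p x = p y := congrArg (fun z => (z.2 : M)) hxy
      exact Subtype.ext ((hp.bijOn (ρ y) (mem_Ici.2 (le_of_lt y.2))).injOn h1 rfl h2)
    · rintro ⟨⟨t, ht⟩, ⟨y, hy⟩⟩
      obtain ⟨x, hx, hxy⟩ := (hp.bijOn t (mem_Ici.2 (le_of_lt ht))).surjOn hy
      have hx : ρ x = t := hx
      exact ⟨⟨x, show a < ρ x from hx ▸ ht⟩, Prod.ext (Subtype.ext hx) (Subtype.ext hxy)⟩
  exact ⟨(Equiv.ofBijective f hbij).toHomeomorphOfContinuousClosed hf hprop.isClosedMap,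
    fun _ => rfl⟩

/-! ### The bottom level set -/

/-- The bottom of a component `C ≃ [a, b] × N` over a space form `N`, parametrized by the sphere
quotient homeomorphic to `N`. -/
theorem exists_bottom_param {ρ : M → ℝ} {a b : ℝ} (hab : a ≤ b) {C : Set M} {N : Type*}
    [TopologicalSpace N] (hN : IsSphericalSpaceForm N)
    (e : C ≃ₜ Icc a b × N) (he : ∀ x : C, ((e x).1 : ℝ) = ρ x) :
    ∃ (k : ℕ) (G : Subgroup (EuclideanSpace ℝ (Fin (k + 1)) ≃ₗᵢ[ℝ] EuclideanSpace ℝ (Fin (k + 1)))),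
      IsSpaceFormGroup k G ∧ ∃ j : SphereQuotient k G → M,
        Continuous j ∧ Function.Injective j ∧ range j = C ∩ ρ ⁻¹' {a} := by
  obtain ⟨k, G, hG, ⟨φ⟩⟩ := hN
  have ha : a ∈ Icc a b := ⟨le_rfl, hab⟩
  refine ⟨k, G, hG, fun z => (e.symm (⟨a, ha⟩, φ.symm z) : M), by fun_prop, ?_, ?_⟩
  · intro z w h
    have := e.symm.injective (Subtype.ext h)
    exact φ.symm.injective (Prod.ext_iff.1 this).2
  · ext x
    constructor
    · rintro ⟨z, rfl⟩
      refine ⟨Subtype.coe_prop _, ?_⟩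
      change ρ _ = a
      rw [← he, e.apply_symm_apply]
    · rintro ⟨hx, hxa⟩
      refine ⟨φ (e ⟨x, hx⟩).2, ?_⟩
      have : e ⟨x, hx⟩ = (⟨a, ha⟩, (e ⟨x, hx⟩).2) :=
        Prod.ext (Subtype.ext ((he _).trans hxa)) rfl
      simp only [φ.symm_apply_apply]
      rw [← this, e.symm_apply_apply]

theorem exists_homeomorph_level [T2Space M] {ρ : M → ℝ} {a b : ℝ} (hab : a ≤ b)
    (hfin : (componentsIn (ρ ⁻¹' Icc a b)).Finite)
    (hj : ∀ C ∈ componentsIn (ρ ⁻¹' Icc a b),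
      ∃ (k : ℕ)
        (G : Subgroup (EuclideanSpace ℝ (Fin (k + 1)) ≃ₗᵢ[ℝ] EuclideanSpace ℝ (Fin (k + 1)))),
        IsSpaceFormGroup k G ∧ ∃ j : SphereQuotient k G → M,
          Continuous j ∧ Function.Injective j ∧ range j = C ∩ ρ ⁻¹' {a}) :
    ∃ (K : Type) (_ : Finite K) (dims : K → ℕ)
      (G : ∀ k : K, Subgroup (EuclideanSpace ℝ (Fin (dims k + 1)) ≃ₗᵢ[ℝ]
        EuclideanSpace ℝ (Fin (dims k + 1)))),
      (∀ k : K, IsSpaceFormGroup (dims k) (G k)) ∧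
      Nonempty (((k : K) × SphereQuotient (dims k) (G k)) ≃ₜ (ρ ⁻¹' {a} : Set M)) := by
  have : Finite (componentsIn (ρ ⁻¹' Icc a b)) := hfin
  -- `Fin _` is used as index type because `K` has to live in `Type`, unlike subsets of `M`.
  let E := Finite.equivFin (componentsIn (ρ ⁻¹' Icc a b))
  have hj' := fun k => hj (E.symm k) (E.symm k).2
  choose dims G hG j hjc hji hjr using hj'
  have hmem : ∀ k z, j k z ∈ (E.symm k : Set M) ∩ ρ ⁻¹' {a} := fun k z => hjr k ▸ mem_range_self z
  let f : ((k : Fin _) × SphereQuotient (dims k) (G k)) → (ρ ⁻¹' {a} : Set M) :=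
    fun z => ⟨j z.1 z.2, (hmem z.1 z.2).2⟩
  have hf : Continuous f :=
    Continuous.subtype_mk (continuous_sigma fun k => hjc k) _
  have hinj : Function.Injective f := by
    rintro ⟨k, z⟩ ⟨l, w⟩ h
    have h : j k z = j l w := congrArg Subtype.val h
    have hkl : k = l := by
      apply E.symm.injective
      apply Subtype.ext
      rw [eq_of_mem_componentsIn (E.symm k).2 (hmem k z).1,
        eq_of_mem_componentsIn (E.symm l).2 (hmem l w).1, h]
    subst hkl
    rw [hji k h]
  have hsurj : Function.Surjective f := by
    rintro ⟨x, hx⟩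
    have hx' : ρ x = a := hx
    have hxA : x ∈ ρ ⁻¹' Icc a b := ⟨hx'.ge, hx' ▸ hab⟩
    have : x ∈ range (j (E ⟨_, mem_componentsIn hxA⟩)) := by
      rw [hjr, E.symm_apply_apply]
      exact ⟨mem_connectedComponentIn hxA, hx⟩
    obtain ⟨z, hz⟩ := this
    exact ⟨⟨_, z⟩, Subtype.ext hz⟩
  exact ⟨_, inferInstance, dims, G, hG,
    ⟨Continuous.homeoOfEquivCompactToT2 (f := Equiv.ofBijective f ⟨hinj, hsurj⟩) hf⟩⟩

end

/-- If a noncompact connected proper metric `n`-manifold `M` with basepoint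
`⋆` and `ρ = d(·, ⋆)` is such that, for some `R > 0`, every connected component of every
closed annulus `{r ≤ ρ ≤ 4r}` with `r > R` is a topological product `[r, 4r] × N` over a
spherical space form `N` compatibly with `ρ`, then `{ρ > R + 1}` is homeomorphic,
compatibly with `ρ`, to `(R + 1, ∞) × Y` where `Y` is a finite disjoint union of
spherical space forms. -/
theorem ends_of_manifold_with_annular_product_structure
    (n : ℕ) (hn : 1 ≤ n)
    (M : Type*) [MetricSpace M] [ProperSpace M]
    [ChartedSpace (EuclideanSpace ℝ (Fin n)) M]
    [ConnectedSpace M] (hnoncpt : ¬ CompactSpace M)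
    (star : M) (ρ : M → ℝ) (hρ : ρ = fun m => dist m star)
    (R : ℝ) (hR : 0 < R)
    (hbundle : ∀ r : ℝ, R < r → ∀ m : M, m ∈ {p : M | r ≤ ρ p ∧ ρ p ≤ 4 * r} →
      ∃ (N : Type) (_ : TopologicalSpace N), IsSphericalSpaceForm N ∧
        ∃ e : (connectedComponentIn {p : M | r ≤ ρ p ∧ ρ p ≤ 4 * r} m) ≃ₜ
            (Set.Icc r (4 * r)) × N,
          ∀ x : connectedComponentIn {p : M | r ≤ ρ p ∧ ρ p ≤ 4 * r} m,
            ((e x).1 : ℝ) = ρ (x : M)) :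
    ∃ (K : Type) (_ : Finite K) (dims : K → ℕ)
      (G : ∀ k : K, Subgroup (EuclideanSpace ℝ (Fin (dims k + 1)) ≃ₗᵢ[ℝ]
        EuclideanSpace ℝ (Fin (dims k + 1)))),
      (∀ k : K, IsSpaceFormGroup (dims k) (G k)) ∧
      ∃ h : ({p : M | R + 1 < ρ p}) ≃ₜ
          (Set.Ioi (R + 1)) × ((k : K) × SphereQuotient (dims k) (G k)),
        ∀ x : {p : M | R + 1 < ρ p}, ((h x).1 : ℝ) = ρ (x : M) := by
  have : LocallyConnectedSpace M :=
    ChartedSpace.locallyConnectedSpace (EuclideanSpace ℝ (Fin n)) M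
  have hρc : Continuous ρ := by rw [hρ]; fun_prop
  have hcpt : ∀ ⦃S : Set ℝ⦄, IsCompact S → IsCompact (ρ ⁻¹' S) := by
    intro S hS
    obtain ⟨B, hB⟩ := hS.bddAbove
    refine (isCompact_closedBall star B).of_isClosed_subset (hS.isClosed.preimage hρc) ?_
    intro x hx
    have := hB hx
    rwa [hρ] at this
  have hprop : IsProperMap ρ := isProperMap_iff_isCompact_preimage.2 ⟨hρc, hcpt⟩
  have hcomp : ∀ r, R < r → ∀ C ∈ componentsIn (ρ ⁻¹' Icc r (4 * r)),
      ∃ (N : Type) (_ : TopologicalSpace N), IsSphericalSpaceForm N ∧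
        ∃ e : C ≃ₜ Icc r (4 * r) × N, ∀ x : C, ((e x).1 : ℝ) = ρ x := by
    rintro r hr C ⟨m, hm, rfl⟩
    exact hbundle r hr m hm
  have hfin : ∀ r, R < r → (componentsIn (ρ ⁻¹' Icc r (4 * r))).Finite := by
    intro r hr
    have h0 : 0 < r := hR.trans hr
    refine finite_components (L := ρ ⁻¹' {2 * r}) (hcpt isCompact_singleton) ?_ ?_
    · intro x hx
      have hx : ρ x = 2 * r := hx
      refine hρc.continuousAt.preimage_mem_nhds (Icc_mem_nhds ?_ ?_) <;> rw [hx] <;> linarith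
    · intro C hC
      obtain ⟨N, _, -, e, he⟩ := hcomp r hr C hC
      have hne : C.Nonempty := by
        obtain ⟨m, hm, rfl⟩ := hC
        exact ⟨m, mem_connectedComponentIn hm⟩
      obtain ⟨m, hm⟩ := hne
      refine ⟨e.symm (⟨2 * r, by constructor <;> linarith⟩, (e ⟨m, hm⟩).2),
        Subtype.coe_prop _, ?_⟩
      change ρ _ = _
      rw [← he, e.apply_symm_apply]
  have hret : ∀ r, R < r → ∃ q, IsLevelRetraction ρ r (Icc r (4 * r)) q := by
    intro r hr
    have hle : r ≤ 4 * r := by linarith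
    refine exists_annulus_retraction hρc (hfin r hr) (fun C hC => ?_) hle
    obtain ⟨N, _, -, e, he⟩ := hcomp r hr C hC
    exact exists_component_retraction hle e he
  have hone : ∀ i : ℕ, (1 : ℝ) ≤ 4 ^ i := fun i => one_le_pow₀ (by norm_num)
  obtain ⟨p, hp⟩ := exists_end_retraction hρc (fun i => 4 ^ i * (R + 1))
    (monotone_nat_of_le_succ fun i => by
      have := hone i
      rw [pow_succ]
      nlinarith)
    ((tendsto_pow_atTop_atTop_of_one_lt (by norm_num)).atTop_mul_const (by linarith))
    (fun i => by
      have h := hret (4 ^ i * (R + 1)) (by nlinarith [hone i])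
      have e : (4 : ℝ) ^ (i + 1) * (R + 1) = 4 * (4 ^ i * (R + 1)) := by ring
      simpa only [e] using h)
  simp only [pow_zero, one_mul] at hp
  obtain ⟨h, hh⟩ := exists_homeomorph_prod hprop hp
  have hR1 : R < R + 1 := by linarith
  have hle : R + 1 ≤ 4 * (R + 1) := by linarith
  obtain ⟨K, hK, dims, G, hG, ⟨φ⟩⟩ := exists_homeomorph_level hle (hfin _ hR1) fun C hC => by
    obtain ⟨N, _, hN, e, he⟩ := hcomp _ hR1 C hC
    exact exists_bottom_param hle hN e he
  exact ⟨K, hK, dims, G, hG, h.trans ((Homeomorph.refl _).prodCongr φ.symm), fun x => hh x⟩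
end

section
/- Let E be a topological space and ρ : E → ℝ a continuous map whose image is contained in [a, b], where a < b, and with E = ρ⁻¹([a, b]). Suppose there are finitely many closed intervals [a_1, b_1], …, [a_m, b_m] with a_1 = a, b_m = b, a_i < a_{i+1} ≤ b_i < b_{i+1} for all i (an ordered cover of [a, b] by overlapping closed intervals), and for each i a topological space F_i and a homeomorphism e_i : ρ⁻¹([a_i, b_i]) → [a_i, b_i] × F_i whose first coordinate function equals the restriction of ρ. Then each F_i is homeomorphic to F_1, and there is a homeomorphism e : E → [a, b] × F_1 whose first coordinate function equals ρ. -/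
/-!
Two product structures `e` over `[c, d]` and `e'` over `[p, q]`, with `c ≤ p ≤ d ≤ q`, both
trivialise the slice `ρ = d`, so comparing them there gives a homeomorphism `φ : G ≃ₜ F` of
their fibers (`fiberHomeo`). After twisting the fiber coordinate of `e'` by `φ`, the two structures
agree on the slice `ρ = d`. Using `e` where `ρ ≤ d` and the twisted `e'` where `ρ ≥ d` therefore
gives a well-defined bijection, continuous in both directions because each half is closed
(`glue_two`). Nothing is required of the comparison of `e` and `e'` on the rest of the overlap,
which may even be a single point. The theorem follows by induction along the chain of intervals.
-/

section

open Set Topology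

variable {E : Type*} [TopologicalSpace E] {ρ : E → ℝ}

/-- A product structure over `[c, d]` with fiber `F`: a homeomorphism
`ρ⁻¹([c, d]) ≃ₜ [c, d] × F` with first coordinate `ρ`. -/
structure ProdStr (ρ : E → ℝ) (c d : ℝ) (F : Type*) [TopologicalSpace F] where
  e : (ρ ⁻¹' Icc c d) ≃ₜ (Icc c d) × F
  fst_e : ∀ x : ρ ⁻¹' Icc c d, ((e x).1 : ℝ) = ρ (x : E)

namespace ProdStr

variable {c d p q : ℝ} {F G : Type*} [TopologicalSpace F] [TopologicalSpace G]

/-- The fiber coordinate. -/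
def fib (P : ProdStr ρ c d F) (x : E) (hx : ρ x ∈ Icc c d) : F := (P.e ⟨x, hx⟩).2

/-- The point of `E` with given value of `ρ` and given fiber coordinate. -/
def pt (P : ProdStr ρ c d F) (t : ℝ) (ht : t ∈ Icc c d) (y : F) : E := P.e.symm (⟨t, ht⟩, y)

lemma rho_pt (P : ProdStr ρ c d F) (t : ℝ) (ht : t ∈ Icc c d) (y : F) :
    ρ (P.pt t ht y) = t := by
  rw [pt, ← P.fst_e, P.e.apply_symm_apply]

lemma fib_pt (P : ProdStr ρ c d F) (t : ℝ) (ht : t ∈ Icc c d) (y : F)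
    (h : ρ (P.pt t ht y) ∈ Icc c d) : P.fib (P.pt t ht y) h = y := by
  simp only [fib, pt, Subtype.coe_eta, P.e.apply_symm_apply]

lemma pt_fib (P : ProdStr ρ c d F) (x : E) (hx : ρ x ∈ Icc c d) (t : ℝ) (ht : t ∈ Icc c d)
    (hxt : ρ x = t) : P.pt t ht (P.fib x hx) = x := by
  have h : ((⟨t, ht⟩ : Icc c d), (P.e ⟨x, hx⟩).2) = P.e ⟨x, hx⟩ :=
    Prod.ext (Subtype.ext (by rw [P.fst_e, hxt])) rfl
  rw [pt, fib, h, P.e.symm_apply_apply]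

lemma continuous_fib (P : ProdStr ρ c d F) {X : Type*} [TopologicalSpace X] {u : X → E}
    (hu : Continuous u) (h : ∀ x, ρ (u x) ∈ Icc c d) :
    Continuous fun x => P.fib (u x) (h x) :=
  continuous_snd.comp (P.e.continuous.comp (hu.subtype_mk h))

lemma continuous_pt (P : ProdStr ρ c d F) {X : Type*} [TopologicalSpace X] {t : X → ℝ}
    {y : X → F} (ht : Continuous t) (hy : Continuous y) (h : ∀ x, t x ∈ Icc c d) :
    Continuous fun x => P.pt (t x) (h x) (y x) :=
  continuous_subtype_val.comp (P.e.symm.continuous.comp ((ht.subtype_mk h).prodMk hy))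

/-- Comparison of the fibers of two product structures on a common slice `ρ = t`. -/
def fiberHomeo (P : ProdStr ρ c d F) (Q : ProdStr ρ p q G) (t : ℝ) (h : t ∈ Icc c d)
    (h' : t ∈ Icc p q) : G ≃ₜ F where
  toFun y := P.fib (Q.pt t h' y) ((Q.rho_pt t h' y).symm ▸ h)
  invFun z := Q.fib (P.pt t h z) ((P.rho_pt t h z).symm ▸ h')
  left_inv y := by simp only [P.pt_fib _ _ t h (Q.rho_pt t h' y), Q.fib_pt]
  right_inv z := by simp only [Q.pt_fib _ _ t h' (P.rho_pt t h z), P.fib_pt]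
  continuous_toFun := P.continuous_fib (Q.continuous_pt continuous_const continuous_id fun _ => h')
    fun y => (Q.rho_pt t h' y).symm ▸ h
  continuous_invFun := Q.continuous_fib (P.continuous_pt continuous_const continuous_id fun _ => h)
    fun z => (P.rho_pt t h z).symm ▸ h'

lemma fiberHomeo_fib (P : ProdStr ρ c d F) (Q : ProdStr ρ p q G) (t : ℝ) (h : t ∈ Icc c d)
    (h' : t ∈ Icc p q) (x : E) (hx : ρ x ∈ Icc c d) (hx' : ρ x ∈ Icc p q) (hxt : ρ x = t) :
    P.fiberHomeo Q t h h' (Q.fib x hx') = P.fib x hx := by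
  change P.fib (Q.pt t h' (Q.fib x hx')) _ = _
  simp only [Q.pt_fib x hx' t h' hxt]

lemma pt_fiberHomeo_symm (P : ProdStr ρ c d F) (Q : ProdStr ρ p q G) (t : ℝ)
    (h : t ∈ Icc c d) (h' : t ∈ Icc p q) (z : F) :
    Q.pt t h' ((P.fiberHomeo Q t h h').symm z) = P.pt t h z :=
  Q.pt_fib _ _ t h' (P.rho_pt t h z)

/-- A function is continuous if its restrictions to the closed half-spaces `u ≤ d` and `d ≤ u`
are. Stated through restrictions since the pieces to be glued are only partially defined. -/
lemma continuous_of_halves {X Y : Type*} [TopologicalSpace X] [TopologicalSpace Y] {u : X → ℝ}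
    (hu : Continuous u) (d : ℝ) {f : X → Y}
    (h₁ : Continuous fun x : {x // u x ≤ d} => f x)
    (h₂ : Continuous fun x : {x // d ≤ u x} => f x) : Continuous f := by
  have h₁' : ContinuousOn f {x | u x ≤ d} := continuousOn_iff_continuous_domRestrict.2 h₁
  have h₂' : ContinuousOn f {x | d ≤ u x} := continuousOn_iff_continuous_domRestrict.2 h₂
  have := h₁'.union_of_isClosed h₂' (isClosed_le hu continuous_const)
    (isClosed_le continuous_const hu)
  rw [← continuousOn_univ]
  exact this.mono fun x _ => le_total (u x) d

/-- Product structures over `[c, d]` and `[p, q]` with `c ≤ p ≤ d ≤ q` glue along `ρ = d`. -/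
lemma glue_two (hρ : Continuous ρ) (P : ProdStr ρ c d F) (Q : ProdStr ρ p q G)
    (hcp : c ≤ p) (hpd : p ≤ d) (hdq : d ≤ q) : Nonempty (ProdStr ρ c q F) := by
  have hd : d ∈ Icc c d := ⟨hcp.trans hpd, le_rfl⟩
  have hd' : d ∈ Icc p q := ⟨hpd, hdq⟩
  let φ : G ≃ₜ F := P.fiberHomeo Q d hd hd'
  have low : ∀ {t}, t ∈ Icc c q → t ≤ d → t ∈ Icc c d := fun h h' => ⟨h.1, h'⟩
  have high : ∀ {t}, t ∈ Icc c q → d ≤ t → t ∈ Icc p q := fun h h' => ⟨hpd.trans h', h.2⟩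
  let f : (ρ ⁻¹' Icc c q) → F := fun x =>
    if h : ρ x ≤ d then P.fib x (low x.2 h) else φ (Q.fib x (high x.2 (le_of_not_ge h)))
  let g : (Icc c q) × F → E := fun z =>
    if h : (z.1 : ℝ) ≤ d then P.pt z.1 (low z.1.2 h) z.2
    else Q.pt z.1 (high z.1.2 (le_of_not_ge h)) (φ.symm z.2)
  have f_low : ∀ (x : ρ ⁻¹' Icc c q) (h : ρ x ≤ d), f x = P.fib x (low x.2 h) :=
    fun x h => dif_pos h
  have g_low : ∀ (z : (Icc c q) × F) (h : (z.1 : ℝ) ≤ d),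
      g z = P.pt z.1 (low z.1.2 h) z.2 := fun z h => dif_pos h
  -- On the slice `ρ = d` the definitions take the branch of `P`, which `φ` matches with that of `Q`.
  have f_high : ∀ (x : ρ ⁻¹' Icc c q) (h : d ≤ ρ x), f x = φ (Q.fib x (high x.2 h)) := by
    intro x h
    rcases h.eq_or_lt with h' | h'
    · rw [f_low x h'.ge]
      exact (P.fiberHomeo_fib Q d hd hd' x _ _ h'.symm).symm
    · exact dif_neg h'.not_ge
  have g_high : ∀ (z : (Icc c q) × F) (h : d ≤ (z.1 : ℝ)),
      g z = Q.pt z.1 (high z.1.2 h) (φ.symm z.2) := by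
    intro z h
    rcases h.eq_or_lt with h' | h'
    · rw [g_low z h'.ge]
      have := P.pt_fiberHomeo_symm Q d hd hd' z.2
      simp only [← h']
      exact this.symm
    · exact dif_neg h'.not_ge
  have rho_g : ∀ z, ρ (g z) = z.1 := by
    intro z
    rcases le_total (z.1 : ℝ) d with h | h
    · rw [g_low z h, P.rho_pt]
    · rw [g_high z h, Q.rho_pt]
  have hρ' : Continuous fun x : ρ ⁻¹' Icc c q => ρ x := hρ.comp continuous_subtype_val
  have hf : Continuous f := by
    refine continuous_of_halves hρ' d ?_ ?_
    · simp only [fun x : {x : ρ ⁻¹' Icc c q // ρ x ≤ d} => f_low x.1 x.2]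
      exact P.continuous_fib (continuous_subtype_val.comp continuous_subtype_val) _
    · simp only [fun x : {x : ρ ⁻¹' Icc c q // d ≤ ρ x} => f_high x.1 x.2]
      exact φ.continuous.comp
        (Q.continuous_fib (continuous_subtype_val.comp continuous_subtype_val) _)
  have hg : Continuous g := by
    refine continuous_of_halves (u := fun z => (z.1 : ℝ)) (by fun_prop) d ?_ ?_
    · simp only [fun z : {z : (Icc c q) × F // (z.1 : ℝ) ≤ d} => g_low z.1 z.2]
      exact P.continuous_pt (by fun_prop) (by fun_prop) _
    · simp only [fun z : {z : (Icc c q) × F // d ≤ (z.1 : ℝ)} => g_high z.1 z.2]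
      exact Q.continuous_pt (by fun_prop) (φ.symm.continuous.comp (by fun_prop)) _
  have g_mem : ∀ z, ρ (g z) ∈ Icc c q := fun z => by rw [rho_g]; exact z.1.2
  refine ⟨⟨{
      toFun := fun x => (⟨ρ x, x.2⟩, f x)
      invFun := fun z => ⟨g z, g_mem z⟩
      left_inv := ?_
      right_inv := ?_
      continuous_toFun := (hρ'.subtype_mk _).prodMk hf
      continuous_invFun := hg.subtype_mk _ }, fun x => rfl⟩⟩
  · intro x
    refine Subtype.ext ?_
    rcases le_total (ρ x) d with h | h
    · change g (⟨ρ x, x.2⟩, f x) = x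
      rw [g_low _ h, f_low x h]
      exact P.pt_fib _ _ _ _ rfl
    · change g (⟨ρ x, x.2⟩, f x) = x
      rw [g_high _ h, f_high x h]
      simp only [φ.symm_apply_apply]
      exact Q.pt_fib _ _ _ _ rfl
  · intro z
    refine Prod.ext (Subtype.ext (rho_g z)) ?_
    change f ⟨g z, g_mem z⟩ = z.2
    rcases le_total (z.1 : ℝ) d with h | h
    · rw [f_low _ (by simpa only [rho_g] using h)]
      simp only [g_low z h, P.fib_pt]
    · rw [f_high _ (by simpa only [rho_g] using h)]
      simp only [g_high z h, Q.fib_pt, φ.apply_symm_apply]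

end ProdStr

end


/-- Gluing product structures over an ordered cover of `[a, b]` by
overlapping closed intervals. If `ρ : E → ℝ` takes values in `[a, b]` and over each
interval `[aseq i, bseq i]` of the cover the preimage is homeomorphic to a product
`[aseq i, bseq i] × F i` compatibly with `ρ`, then all fibers `F i` are homeomorphic to
`F 0` and `E` is homeomorphic to `[a, b] × F 0` compatibly with `ρ`. -/
theorem glue_interval_product_structures
    {E : Type*} [TopologicalSpace E] (ρ : E → ℝ) (hρ : Continuous ρ)
    (a b : ℝ) (hab : a < b) (hrange : ∀ x : E, ρ x ∈ Set.Icc a b)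
    (m : ℕ) (hm : 1 ≤ m) (aseq bseq : ℕ → ℝ)
    (ha0 : aseq 0 = a) (hbm : bseq (m - 1) = b)
    (hchain : ∀ i : ℕ, i + 1 < m →
      aseq i < aseq (i + 1) ∧ aseq (i + 1) ≤ bseq i ∧ bseq i < bseq (i + 1))
    (F : ℕ → Type*) [∀ i, TopologicalSpace (F i)]
    (he : ∀ i : ℕ, i < m →
      ∃ e : (ρ ⁻¹' Set.Icc (aseq i) (bseq i)) ≃ₜ (Set.Icc (aseq i) (bseq i)) × F i,
        ∀ x : ρ ⁻¹' Set.Icc (aseq i) (bseq i), ((e x).1 : ℝ) = ρ (x : E)) :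
    (∀ i : ℕ, i < m → Nonempty (F i ≃ₜ F 0)) ∧
      ∃ e : E ≃ₜ (Set.Icc a b) × F 0, ∀ x : E, ((e x).1 : ℝ) = ρ x := by
  -- The intervals glued so far end at `bseq k`; the next one starts inside `[a, bseq k]`.
  have key : ∀ k : ℕ, k < m → a ≤ aseq k ∧ (∀ i ≤ k, Nonempty (F i ≃ₜ F 0)) ∧
      Nonempty (ProdStr ρ a (bseq k) (F 0)) := by
    intro k
    induction k with
    | zero =>
      intro h
      obtain ⟨e, h_e⟩ := he 0 h
      refine ⟨ha0.ge, fun i hi => ?_, ha0 ▸ ⟨⟨e, h_e⟩⟩⟩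
      obtain rfl : i = 0 := by omega
      exact ⟨Homeomorph.refl _⟩
    | succ k ih =>
      intro h
      obtain ⟨hak, hF, ⟨P⟩⟩ := ih (by omega)
      obtain ⟨h₁, h₂, h₃⟩ := hchain k h
      obtain ⟨e, h_e⟩ := he (k + 1) h
      let Q : ProdStr ρ (aseq (k + 1)) (bseq (k + 1)) (F (k + 1)) := ⟨e, h_e⟩
      have ha : a ≤ aseq (k + 1) := hak.trans h₁.le
      refine ⟨ha, fun i hi => ?_, P.glue_two hρ Q ha h₂ h₃.le⟩
      rcases hi.eq_or_lt with rfl | hi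
      · exact ⟨P.fiberHomeo Q (bseq k) ⟨ha.trans h₂, le_rfl⟩ ⟨h₂, h₃.le⟩⟩
      · exact hF i (by omega)
  refine ⟨fun i hi => (key i hi).2.1 i le_rfl, ?_⟩
  obtain ⟨-, -, ⟨P⟩⟩ := key (m - 1) (by omega)
  rw [hbm] at P
  have huniv : ρ ⁻¹' Set.Icc a b = Set.univ := Set.eq_univ_of_forall hrange
  exact ⟨((Homeomorph.Set.univ E).symm.trans (Homeomorph.setCongr huniv.symm)).trans P.e,
    fun x => P.fst_e _⟩
end

section
/- Let X be a metric space with basepoint ⋆. Assume X satisfies the following pointed-convexity property: for every b > 0, every pair of isometric embeddings γ₁, γ₂ : [0, b] → X with γ₁(0) = γ₂(0) = ⋆, and every t ∈ [0, 1], one has d(γ₁(t b), γ₂(t b)) ≤ t · d(γ₁(b), γ₂(b)). Let r₁, r₂ : [0, ∞) → X be isometric embeddings (geodesic rays) with r₁(0) = r₂(0) = ⋆, and suppose there exists s > 0 with d(r₁(s), r₂(s)) = 2s. Then d(r₁(t), r₂(t)) = 2t for every t ≥ s. -/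
/-- In a pointed metric space satisfying the sharp pointed-convexity
inequality (5.1), two geodesic rays from the basepoint which diverge maximally at
some time `s > 0` diverge maximally for all later times. -/
theorem rays_maximally_diverging_forever
    {X : Type*} [MetricSpace X] (star : X)
    (hconv : ∀ b : ℝ, 0 < b → ∀ γ₁ γ₂ : ℝ → X,
      (∀ s ∈ Set.Icc (0:ℝ) b, ∀ t ∈ Set.Icc (0:ℝ) b, dist (γ₁ s) (γ₁ t) = |s - t|) →
      (∀ s ∈ Set.Icc (0:ℝ) b, ∀ t ∈ Set.Icc (0:ℝ) b, dist (γ₂ s) (γ₂ t) = |s - t|) →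
      γ₁ 0 = star → γ₂ 0 = star →
      ∀ t ∈ Set.Icc (0:ℝ) 1, dist (γ₁ (t * b)) (γ₂ (t * b)) ≤ t * dist (γ₁ b) (γ₂ b))
    (r₁ r₂ : ℝ → X)
    (hr₁ : ∀ s ∈ Set.Ici (0:ℝ), ∀ t ∈ Set.Ici (0:ℝ), dist (r₁ s) (r₁ t) = |s - t|)
    (hr₂ : ∀ s ∈ Set.Ici (0:ℝ), ∀ t ∈ Set.Ici (0:ℝ), dist (r₂ s) (r₂ t) = |s - t|)
    (h₁0 : r₁ 0 = star) (h₂0 : r₂ 0 = star)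
    (s : ℝ) (hs : 0 < s) (hdiv : dist (r₁ s) (r₂ s) = 2 * s) :
    ∀ t : ℝ, s ≤ t → dist (r₁ t) (r₂ t) = 2 * t := by
  intro t hst
  have ht : 0 < t := hs.trans_le hst
  apply le_antisymm
  -- Upper bound: the triangle inequality through the basepoint.
  · have h1 := hr₁ t ht.le 0 (Set.mem_Ici.2 le_rfl)
    have h2 := hr₂ 0 (Set.mem_Ici.2 le_rfl) t ht.le
    rw [sub_zero, abs_of_pos ht, h₁0] at h1
    rw [zero_sub, abs_neg, abs_of_pos ht, h₂0] at h2
    linarith [dist_triangle (r₁ t) star (r₂ t)]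
  -- Lower bound: pointed convexity on `[0, t]` at the parameter `s / t`.
  · have h := hconv t ht r₁ r₂ (fun a ha b hb => hr₁ a ha.1 b hb.1)
      (fun a ha b hb => hr₂ a ha.1 b hb.1) h₁0 h₂0 (s / t)
      ⟨by positivity, (div_le_one ht).2 hst⟩
    rw [div_mul_cancel₀ s ht.ne', hdiv, div_mul_eq_mul_div, le_div_iff₀ ht] at h
    exact le_of_mul_le_mul_left (by linarith) hs
end

section
/- Let n ≥ 2 and let Z be a closed convex subset of n-dimensional Euclidean space ℝⁿ with Z ≠ ℝⁿ and such that Z contains at least two distinct points. Then there exist distinct points z₁, z₂ in the frontier (topological boundary) of Z and unit vectors u₁, u₂ ∈ ℝⁿ such that ⟨z − z₁, u₁⟩ ≤ 0 and ⟨z − z₂, u₂⟩ ≤ 0 for every z ∈ Z (that is, u_i is the outward normal of a supporting hyperplane of Z at z_i), and ⟨u₁, u₂⟩ > 0. Consequently, the ray t ↦ z₁ + t u₁ eventually lies strictly on the same side of the supporting hyperplane {x : ⟨x − z₂, u₂⟩ = 0} as the ray t ↦ z₂ + t u₂, and vice versa. -/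
/-!
The nearest-point projection `P` onto `Z` is 1-Lipschitz, and for `x ∉ Z` the vector `x - P x` is
an outward normal at the frontier point `P x`. If `x ∉ Z` and `y` is close to `x`, then `y - P y`
is close to `x - P x`, so the two normals make a positive inner product; hence it suffices to find
arbitrarily close points `x ∉ Z` and `y` with `P x ≠ P y` (`two_normals_of_near`).

Suppose that `P` is instead constant near every `x ∉ Z`. Fix `x₀ ∉ Z`, `p = P x₀`, another point
`w` of `Z`, and, using `n ≥ 2`, a vector `c ≠ 0` orthogonal to `w - p`. Moving `x₀` slightly along
`c` gives a point `x` with `P x = p` and `⟪x - p, c⟫ ≠ 0`. The points `x + t (w - p)` never meet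
`p`, since their offset from `p` keeps the same nonzero inner product with `c`. But the set of `t`
for which `x + t (w - p)` projects to `p` is closed, and bounded above because
`⟪w - p, x + t (w - p) - p⟫ ≤ 0` there. At its largest element `P` is not locally constant, a
contradiction (`two_normals_of_transverse`).
-/

open RealInnerProductSpace

section Projection

variable {E : Type*} [NormedAddCommGroup E] [InnerProductSpace ℝ E]

/-- `p` is the nearest-point projection of `x` on the convex set `Z`, expressed by the variational
inequality: `p ∈ Z` and `x - p` lies in the normal cone of `Z` at `p`. -/
def IsConvexProj (Z : Set E) (x p : E) : Prop :=
  p ∈ Z ∧ ∀ w ∈ Z, ⟪w - p, x - p⟫ ≤ 0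

/-- `Z` has nonzero outward normals `a`, `b` at distinct points `p`, `q` with `⟪a, b⟫ > 0`. -/
def HasTwoNormals (Z : Set E) : Prop :=
  ∃ p q a b : E, p ∈ Z ∧ q ∈ Z ∧ p ≠ q ∧ (∀ w ∈ Z, ⟪w - p, a⟫ ≤ 0) ∧
    (∀ w ∈ Z, ⟪w - q, b⟫ ≤ 0) ∧ 0 < ⟪a, b⟫

lemma exists_isConvexProj [CompleteSpace E] {Z : Set E} (hc : IsClosed Z) (hZ : Convex ℝ Z)
    (hne : Z.Nonempty) (x : E) : ∃ p, IsConvexProj Z x p := by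
  obtain ⟨p, hp, h⟩ := exists_norm_eq_iInf_of_complete_convex hne hc.isComplete hZ x
  refine ⟨p, hp, fun w hw => ?_⟩
  rw [real_inner_comm]
  exact (norm_eq_iInf_iff_real_inner_le_zero hZ hp).1 h w hw

lemma IsConvexProj.norm_sub_le {Z : Set E} {x y p q : E} (hp : IsConvexProj Z x p)
    (hq : IsConvexProj Z y q) : ‖p - q‖ ≤ ‖x - y‖ := by
  have h1 := hp.2 q hq.1
  have h2 := hq.2 p hp.1
  have h3 : ⟪p - q, p - q⟫ ≤ ⟪p - q, x - y⟫ := by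
    have e : ⟪p - q, x - y⟫ - ⟪p - q, p - q⟫ = -⟪q - p, x - p⟫ - ⟪p - q, y - q⟫ := by
      simp only [inner_sub_left, inner_sub_right]; ring
    linarith
  rw [real_inner_self_eq_norm_sq] at h3
  have h4 := real_inner_le_norm (p - q) (x - y)
  by_contra! h
  nlinarith [norm_nonneg (p - q), norm_nonneg (x - y)]

lemma two_normals_of_near {Z : Set E} {x y p q : E} (hp : IsConvexProj Z x p)
    (hq : IsConvexProj Z y q) (hpq : p ≠ q) (hxy : 2 * ‖x - y‖ < ‖x - p‖) :
    HasTwoNormals Z := by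
  refine ⟨p, q, x - p, y - q, hp.1, hq.1, hpq, hp.2, hq.2, ?_⟩
  have h1 : ‖(x - p) - (y - q)‖ ≤ 2 * ‖x - y‖ := by
    have e : (x - p) - (y - q) = (x - y) - (p - q) := by abel
    rw [e]
    linarith [_root_.norm_sub_le (x - y) (p - q), hp.norm_sub_le hq]
  have h2 := real_inner_le_norm (x - p) ((x - p) - (y - q))
  rw [inner_sub_right, real_inner_self_eq_norm_sq] at h2
  nlinarith [norm_nonneg (x - y)]

/-- If `x - p` is a normal at `p` not orthogonal to some `c ⟂ w - p`, then pushing `x` in the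
direction `w - p` up to the last point that projects to `p` yields two normals. -/
lemma two_normals_of_transverse [CompleteSpace E] {Z : Set E} (hcl : IsClosed Z)
    (hZ : Convex ℝ Z) {x p w c : E} (hp : IsConvexProj Z x p) (hw : w ∈ Z) (hwp : w ≠ p)
    (hc : ⟪w - p, c⟫ = 0) (hxc : ⟪x - p, c⟫ ≠ 0) : HasTwoNormals Z := by
  set d := w - p with hd
  have hd0 : 0 < ‖d‖ := norm_pos_iff.2 (sub_ne_zero.2 hwp)
  let S : Set ℝ := {t | ∀ v ∈ Z, ⟪v - p, x + t • d - p⟫ ≤ 0}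
  have hS0 : (0 : ℝ) ∈ S := fun v hv => by simpa using hp.2 v hv
  have hScl : IsClosed S := by
    have : S = ⋂ v ∈ Z, {t : ℝ | ⟪v - p, x + t • d - p⟫ ≤ 0} := by ext; simp [S]
    rw [this]
    exact isClosed_biInter fun v _ => isClosed_le (by fun_prop) continuous_const
  have hSb : BddAbove S := by
    refine ⟨-⟪d, x - p⟫ / ‖d‖ ^ 2, fun t ht => ?_⟩
    have h := ht w hw
    have e : x + t • d - p = (x - p) + t • d := by abel
    rw [← hd, e, inner_add_right, real_inner_smul_right, real_inner_self_eq_norm_sq] at h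
    rw [le_div_iff₀ (by positivity)]
    linarith
  have hm : sSup S ∈ S := hScl.csSup_mem ⟨0, hS0⟩ hSb
  set s := sSup S
  have hpos : 0 < ‖x + s • d - p‖ := by
    rw [norm_pos_iff]
    intro h
    have e : x - p = x + s • d - p - s • d := by abel
    rw [e, h, zero_sub, inner_neg_left, real_inner_smul_left, hc] at hxc
    simp at hxc
  set r := ‖x + s • d - p‖ with hr
  -- The step `δ` is chosen so that `2 * ‖δ • d‖ < r`.
  set δ := r / (4 * ‖d‖) with hδ
  have hδ0 : 0 < δ := by positivity
  obtain ⟨q, hq⟩ := exists_isConvexProj hcl hZ ⟨p, hp.1⟩ (x + (s + δ) • d)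
  refine two_normals_of_near (x := x + s • d) (p := p) ⟨hp.1, hm⟩ hq ?_ ?_
  · rintro rfl
    have : s + δ ≤ s := le_csSup hSb hq.2
    linarith
  · have e : x + s • d - (x + (s + δ) • d) = -(δ • d) := by rw [add_smul]; abel
    rw [e, norm_neg, norm_smul, Real.norm_of_nonneg hδ0.le, ← hr]
    have : δ * ‖d‖ = r / 4 := by rw [hδ]; field_simp
    rw [this]; linarith

lemma hasTwoNormals [FiniteDimensional ℝ E] (hdim : 2 ≤ Module.finrank ℝ E) {Z : Set E}
    (hcl : IsClosed Z) (hZ : Convex ℝ Z) (hne : Z ≠ Set.univ) (hnt : Z.Nontrivial) :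
    HasTwoNormals Z := by
  haveI : CompleteSpace E := FiniteDimensional.complete ℝ E
  obtain ⟨x, hx⟩ := (Set.ne_univ_iff_exists_notMem Z).1 hne
  obtain ⟨p, hp⟩ := exists_isConvexProj hcl hZ hnt.nonempty x
  obtain ⟨w, hw, hwp⟩ := hnt.exists_ne p
  have hpos : 0 < ‖x - p‖ := norm_pos_iff.2 (sub_ne_zero.2 fun h => hx (h ▸ hp.1))
  obtain ⟨c, hc, hc0⟩ : ∃ c : E, ⟪w - p, c⟫ = 0 ∧ c ≠ 0 := by
    have : (ℝ ∙ (w - p))ᗮ ≠ ⊥ := by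
      intro h
      rw [Submodule.orthogonal_eq_bot_iff] at h
      have h1 := finrank_span_le_card (R := ℝ) ({w - p} : Set E)
      rw [h, finrank_top] at h1
      simp at h1
      omega
    obtain ⟨c, hc, h0⟩ := Submodule.exists_mem_ne_zero_of_ne_bot this
    exact ⟨c, Submodule.mem_orthogonal_singleton_iff_inner_right.1 hc, h0⟩
  have hcpos : 0 < ‖c‖ := norm_pos_iff.2 hc0
  by_cases hxc : ⟪x - p, c⟫ = 0
  · -- Tilt `x` slightly along `c`: either the projection moves, or the new normal is transverse.
    set r := ‖x - p‖ / (4 * ‖c‖) with hr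
    have hr0 : 0 < r := by positivity
    obtain ⟨q, hq⟩ := exists_isConvexProj hcl hZ hnt.nonempty (x + r • c)
    by_cases hpq : p = q
    · subst hpq
      refine two_normals_of_transverse hcl hZ hq hw hwp hc ?_
      have e : x + r • c - p = (x - p) + r • c := by abel
      rw [e, inner_add_left, hxc, real_inner_smul_left, real_inner_self_eq_norm_sq]
      positivity
    · refine two_normals_of_near hp hq hpq ?_
      have e : x - (x + r • c) = -(r • c) := by abel
      have : r * ‖c‖ = ‖x - p‖ / 4 := by rw [hr]; field_simp
      rw [e, norm_neg, norm_smul, Real.norm_of_nonneg hr0.le, this]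
      linarith
  · exact two_normals_of_transverse hcl hZ hp hw hwp hc hxc

lemma mem_frontier_of_normal {Z : Set E} {p a : E} (hp : p ∈ Z) (ha : a ≠ 0)
    (h : ∀ w ∈ Z, ⟪w - p, a⟫ ≤ 0) : p ∈ frontier Z := by
  refine ⟨subset_closure hp, fun hi => ?_⟩
  have ht : Filter.Tendsto (fun t : ℝ => p + t • a) (nhdsWithin 0 (Set.Ioi 0)) (nhds p) := by
    have : Continuous fun t : ℝ => p + t • a := by fun_prop
    simpa using (this.tendsto 0).mono_left nhdsWithin_le_nhds
  obtain ⟨t, htZ, ht0⟩ :=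
    ((ht.eventually (mem_interior_iff_mem_nhds.1 hi)).and self_mem_nhdsWithin).exists
  have h1 := h _ htZ
  rw [add_sub_cancel_left, real_inner_smul_left, real_inner_self_eq_norm_sq] at h1
  have h2 : 0 < t := ht0
  have : 0 < ‖a‖ := norm_pos_iff.2 ha
  have : 0 < t * ‖a‖ ^ 2 := by positivity
  linarith

end Projection

/-- A proper closed convex subset of `ℝⁿ` (`n ≥ 2`) with at least two
points admits two distinct boundary points with supporting hyperplanes whose outward
unit normals make a strictly positive inner product; consequently each of the two
outward normal rays eventually lies strictly on the positive side of the other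
supporting hyperplane. -/
theorem convex_body_two_supporting_hyperplanes
    (n : ℕ) (hn : 2 ≤ n) (Z : Set (EuclideanSpace ℝ (Fin n)))
    (hZclosed : IsClosed Z) (hZconvex : Convex ℝ Z) (hZne : Z ≠ Set.univ)
    (z z' : EuclideanSpace ℝ (Fin n)) (hz : z ∈ Z) (hz' : z' ∈ Z) (hzz' : z ≠ z') :
    ∃ z₁ z₂ : EuclideanSpace ℝ (Fin n), z₁ ∈ frontier Z ∧ z₂ ∈ frontier Z ∧ z₁ ≠ z₂ ∧
      ∃ u₁ u₂ : EuclideanSpace ℝ (Fin n), ‖u₁‖ = 1 ∧ ‖u₂‖ = 1 ∧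
        (∀ w ∈ Z, ⟪w - z₁, u₁⟫ ≤ 0) ∧ (∀ w ∈ Z, ⟪w - z₂, u₂⟫ ≤ 0) ∧
        0 < ⟪u₁, u₂⟫ ∧
        ∃ T : ℝ, ∀ t : ℝ, T < t →
          0 < ⟪(z₁ + t • u₁) - z₂, u₂⟫ ∧ 0 < ⟪(z₂ + t • u₂) - z₁, u₁⟫ := by
  obtain ⟨p, q, a, b, hp, hq, hpq, ha, hb, hab⟩ :=
    hasTwoNormals (by simpa using hn) hZclosed hZconvex hZne ⟨z, hz, z', hz', hzz'⟩
  have ha0 : a ≠ 0 := by rintro rfl; simp at hab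
  have hb0 : b ≠ 0 := by rintro rfl; simp at hab
  have hna : 0 < ‖a‖⁻¹ := inv_pos.2 (norm_pos_iff.2 ha0)
  have hnb : 0 < ‖b‖⁻¹ := inv_pos.2 (norm_pos_iff.2 hb0)
  have huv : 0 < ⟪‖a‖⁻¹ • a, ‖b‖⁻¹ • b⟫ := by
    rw [real_inner_smul_left, real_inner_smul_right]; positivity
  refine ⟨p, q, mem_frontier_of_normal hp ha0 ha, mem_frontier_of_normal hq hb0 hb, hpq,
    ‖a‖⁻¹ • a, ‖b‖⁻¹ • b, norm_smul_inv_norm ha0, norm_smul_inv_norm hb0, fun w hw => ?_,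
    fun w hw => ?_, huv, ?_⟩
  · rw [real_inner_smul_right]
    exact mul_nonpos_of_nonneg_of_nonpos hna.le (ha w hw)
  · rw [real_inner_smul_right]
    exact mul_nonpos_of_nonneg_of_nonpos hnb.le (hb w hw)
  · generalize ‖a‖⁻¹ • a = u at *
    generalize ‖b‖⁻¹ • b = v at *
    refine ⟨max (-⟪p - q, v⟫ / ⟪u, v⟫) (-⟪q - p, u⟫ / ⟪u, v⟫), fun t ht => ?_⟩
    obtain ⟨h1, h2⟩ := max_lt_iff.1 ht
    rw [div_lt_iff₀ huv] at h1 h2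
    have e1 : p + t • u - q = (p - q) + t • u := by abel
    have e2 : q + t • v - p = (q - p) + t • v := by abel
    rw [e1, e2, inner_add_left, inner_add_left, real_inner_smul_left, real_inner_smul_left,
      real_inner_comm u v]
    constructor <;> linarith
end

section
/- Let n ≥ 2 be an integer, r₀ > 0 and c′ > 0 real numbers, (S, μ) a measure space with μ a finite measure, and h₁, …, h_{n−1} : S → ℝ measurable functions with 0 ≤ h_j(s) ≤ 1/r₀ for μ-almost every s ∈ S and each j. Suppose that for every r > 0, ∫_S ∏_{j=1}^{n−1} (1 + h_j(s)(r − r₀)) dμ(s) = n c′ r^{n−1}. Then μ(S) = n c′ r₀^{n−1}, and for each j one has h_j(s) = 1/r₀ for μ-almost every s ∈ S. -/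
/-! At `r = r₀` every factor is `1`, so the tube formula reads `μ(S) = n c' r₀^{n-1}`.
At `r = 2 r₀` each factor `1 + h_j r₀` lies in `[1, 2]`, so the product is at most `2^{n-1}` a.e.,
while its integral is `n c' (2 r₀)^{n-1} = 2^{n-1} μ(S)`. Hence the product equals its upper bound
a.e., which forces every factor to be `2`, that is, `h_j = 1 / r₀`. -/

open MeasureTheory

/-- Measure-theoretic rigidity of the tube formula. If the measure `μ` is
finite, the principal curvature functions satisfy `0 ≤ h_j ≤ 1/r₀` a.e., and the tube
formula `∫ ∏_j (1 + h_j (r - r₀)) dμ = n c' r^{n-1}` holds for all `r > 0`, then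
`μ(S) = n c' r₀^{n-1}` and each `h_j = 1/r₀` almost everywhere. -/
theorem tube_formula_rigidity
    (n : ℕ) (hn : 2 ≤ n) (r₀ c' : ℝ) (hr₀ : 0 < r₀) (hc' : 0 < c')
    {S : Type*} [MeasurableSpace S] (μ : Measure S) [IsFiniteMeasure μ]
    (h : Fin (n - 1) → S → ℝ)
    (hmeas : ∀ j, Measurable (h j))
    (hbound : ∀ j, ∀ᵐ s ∂μ, 0 ≤ h j s ∧ h j s ≤ 1 / r₀)
    (htube : ∀ r : ℝ, 0 < r →
      ∫ s, (∏ j : Fin (n - 1), (1 + h j s * (r - r₀))) ∂μ = n * c' * r ^ (n - 1)) :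
    (μ Set.univ).toReal = n * c' * r₀ ^ (n - 1) ∧
      ∀ j, ∀ᵐ s ∂μ, h j s = 1 / r₀ := by
  have h_mass : (μ Set.univ).toReal = n * c' * r₀ ^ (n - 1) := by
    simpa [Measure.real] using htube r₀ hr₀
  refine ⟨h_mass, ?_⟩
  have hb : ∀ᵐ s ∂μ, ∀ j, 1 ≤ 1 + h j s * r₀ ∧ 1 + h j s * r₀ ≤ 2 := by
    filter_upwards [ae_all_iff.2 hbound] with s hs j
    have h0 := mul_nonneg (hs j).1 hr₀.le
    have h1 := (le_div_iff₀ hr₀).1 (hs j).2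
    constructor <;> linarith
  have hle : ∀ᵐ s ∂μ, ∏ j, (1 + h j s * r₀) ≤ 2 ^ (n - 1) := by
    filter_upwards [hb] with s hs
    calc ∏ j, (1 + h j s * r₀) ≤ ∏ _j : Fin (n - 1), (2 : ℝ) :=
          Finset.prod_le_prod (fun j _ => zero_le_one.trans (hs j).1) (fun j _ => (hs j).2)
      _ = 2 ^ (n - 1) := by simp
  have hint : Integrable (fun s => ∏ j, (1 + h j s * r₀)) μ := by
    refine Integrable.of_bound (C := 2 ^ (n - 1))
      (Measurable.aestronglyMeasurable (by fun_prop)) ?_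
    filter_upwards [hb, hle] with s hs hs'
    rwa [Real.norm_of_nonneg (Finset.prod_nonneg fun j _ => zero_le_one.trans (hs j).1)]
  have hzero : ∫ s, (2 ^ (n - 1) - ∏ j, (1 + h j s * r₀)) ∂μ = 0 := by
    have h2 := htube (2 * r₀) (by positivity)
    rw [show 2 * r₀ - r₀ = r₀ by ring, mul_pow] at h2
    rw [integral_sub (integrable_const _) hint, h2, integral_const, Measure.real, h_mass,
      smul_eq_mul]
    ring
  have heq := (integral_eq_zero_iff_of_nonneg_ae
    (by filter_upwards [hle] with s hs using sub_nonneg.2 hs)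
    ((integrable_const _).sub hint)).1 hzero
  intro j
  filter_upwards [hb, heq] with s hs hs'
  have hj : 1 + h j s * r₀ = 2 := by
    by_contra hne
    have hlt : ∏ j, (1 + h j s * r₀) < ∏ _j : Fin (n - 1), (2 : ℝ) :=
      Finset.prod_lt_prod (fun i _ => zero_lt_one.trans_le (hs i).1) (fun i _ => (hs i).2)
        ⟨j, Finset.mem_univ j, lt_of_le_of_ne (hs j).2 hne⟩
    simp only [Finset.prod_const, Finset.card_univ, Fintype.card_fin] at hlt
    simp only [Pi.sub_apply, Pi.zero_apply] at hs'
    linarith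
  rw [eq_div_iff hr₀.ne']
  linarith
end

section
/- Fix β ∈ (0, 1), δ_∞ > 1, and δ₀ > 0. For ε > 0 define c₁(ε) = (1−β)((1+ε)δ_∞ − 1)/(1+2ε) and c₂(ε) = (1−β)(ε δ_∞ + 1)/(1+2ε), and let R(ε) > 0 be the unique solution of −ε c₁(ε)(1+R(ε))^{−ε−1} + (1+ε) c₂(ε)(1+R(ε))^{ε} = 1 + β. Define C(ε) = (c₁(ε)(1+R(ε))^{−ε} + c₂(ε)(1+R(ε))^{1+ε}) / ((1+β) δ₀). Then δ₀ · C(ε)/(1 + R(ε)) → 1 as ε → 0⁺; in particular C(ε) → ∞ as ε → 0⁺, so C(ε) > 1 for all sufficiently small ε > 0. -/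
/-!
Write `x = 1 + R(ε)`, `y = x ^ ε` and `s = x ^ (-ε - 1)`, so that `0 < s ≤ 1 / x < 1`. The equation
for `R(ε)` gives `y = (1 + β + ε c₁ s) / ((1 + ε) c₂)`. As `c₁` and `s` are bounded and
`c₂ → 1 - β`, this forces `y → (1 + β) / (1 - β) > 1`, hence `log x = (log y) / ε → ∞`, so
`x → ∞` and `s → 0`. Since `δ₀ C(ε) / x = (c₁ s + c₂ y) / (1 + β)`, its limit is
`(0 + (1 + β)) / (1 + β) = 1`, and `C(ε)` grows like `x / δ₀`.
-/

open Filter Topology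

noncomputable def LottC1 (β δinf ε : ℝ) : ℝ := (1 - β) * ((1 + ε) * δinf - 1) / (1 + 2 * ε)

noncomputable def LottC2 (β δinf ε : ℝ) : ℝ := (1 - β) * (ε * δinf + 1) / (1 + 2 * ε)

/-- The scaling factor `C(ε)` from the third gluing condition (4.3):
`C = (c₁ (1+R)^{−ε} + c₂ (1+R)^{1+ε}) / ((1+β) δ₀)`. -/
noncomputable def LottScale (β δinf δ₀ ε R : ℝ) : ℝ :=
  (LottC1 β δinf ε * (1 + R) ^ (-ε) + LottC2 β δinf ε * (1 + R) ^ (1 + ε)) / ((1 + β) * δ₀)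

lemma tendsto_lottC1 (β δinf : ℝ) :
    Tendsto (LottC1 β δinf) (𝓝[>] 0) (𝓝 ((1 - β) * (δinf - 1))) := by
  have h : ContinuousAt (LottC1 β δinf) 0 := by
    unfold LottC1
    exact ContinuousAt.div (by fun_prop) (by fun_prop) (by norm_num)
  have h2 := h.tendsto.mono_left (nhdsWithin_le_nhds (s := Set.Ioi 0))
  simpa [LottC1] using h2

lemma tendsto_lottC2 (β δinf : ℝ) :
    Tendsto (LottC2 β δinf) (𝓝[>] 0) (𝓝 (1 - β)) := by
  have h : ContinuousAt (LottC2 β δinf) 0 := by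
    unfold LottC2
    exact ContinuousAt.div (by fun_prop) (by fun_prop) (by norm_num)
  have h2 := h.tendsto.mono_left (nhdsWithin_le_nhds (s := Set.Ioi 0))
  simpa [LottC2] using h2

/-- With `R(ε)` the solution of the fourth gluing condition of (4.3) and
`C(ε)` the scaling factor given by the third gluing condition, one has
`δ₀ C(ε)/(1 + R(ε)) → 1` as `ε → 0⁺`; in particular `C(ε) → ∞`, so `C(ε) > 1` for all
sufficiently small `ε > 0`. -/
theorem gluing_scale_asymptotics
    (β δinf δ₀ : ℝ) (hβ : β ∈ Set.Ioo (0:ℝ) 1) (hδinf : 1 < δinf) (hδ₀ : 0 < δ₀)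
    (Rf : ℝ → ℝ)
    (hRf : ∀ ε : ℝ, 0 < ε → 0 < Rf ε ∧
      -ε * LottC1 β δinf ε * (1 + Rf ε) ^ (-ε - 1)
        + (1 + ε) * LottC2 β δinf ε * (1 + Rf ε) ^ ε = 1 + β) :
    Tendsto (fun ε : ℝ => δ₀ * LottScale β δinf δ₀ ε (Rf ε) / (1 + Rf ε)) (𝓝[>] 0) (𝓝 1) ∧
    Tendsto (fun ε : ℝ => LottScale β δinf δ₀ ε (Rf ε)) (𝓝[>] 0) atTop ∧
    ∀ᶠ ε in 𝓝[>] (0:ℝ), 1 < LottScale β δinf δ₀ ε (Rf ε) := by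
  obtain ⟨hβ0, hβ1⟩ := hβ
  have hpos : ∀ᶠ ε in 𝓝[>] (0:ℝ), 0 < ε := eventually_mem_nhdsWithin
  have hid : Tendsto (fun ε : ℝ => ε) (𝓝[>] 0) (𝓝 0) := nhdsWithin_le_nhds
  have hc1 := tendsto_lottC1 β δinf
  have hc2 := tendsto_lottC2 β δinf
  have hs0 : ∀ ε : ℝ, 0 < ε → 0 ≤ (1 + Rf ε) ^ (-ε - 1) := fun ε hε =>
    Real.rpow_nonneg (by linarith [(hRf ε hε).1]) _
  have hsx : ∀ ε : ℝ, 0 < ε → (1 + Rf ε) ^ (-ε - 1) ≤ (1 + Rf ε)⁻¹ := fun ε hε => by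
    rw [← Real.rpow_neg_one]
    exact Real.rpow_le_rpow_of_exponent_le (by linarith [(hRf ε hε).1]) (by linarith)
  have hs1 : ∀ ε : ℝ, 0 < ε → (1 + Rf ε) ^ (-ε - 1) ≤ 1 := fun ε hε =>
    (hsx ε hε).trans (inv_le_one_of_one_le₀ (by linarith [(hRf ε hε).1]))
  have hεs : Tendsto (fun ε : ℝ => ε * (1 + Rf ε) ^ (-ε - 1)) (𝓝[>] 0) (𝓝 0) := by
    refine squeeze_zero' ?_ ?_ hid
    · filter_upwards [hpos] with ε hε using mul_nonneg hε.le (hs0 ε hε)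
    · filter_upwards [hpos] with ε hε using mul_le_of_le_one_right hε.le (hs1 ε hε)
  have hy : Tendsto (fun ε : ℝ => (1 + Rf ε) ^ ε) (𝓝[>] 0) (𝓝 ((1 + β) / (1 - β))) := by
    have hden : Tendsto (fun ε : ℝ => (1 + ε) * LottC2 β δinf ε) (𝓝[>] 0) (𝓝 (1 - β)) := by
      simpa using (hid.const_add 1).mul hc2
    have hnum : Tendsto (fun ε : ℝ => 1 + β + LottC1 β δinf ε * (ε * (1 + Rf ε) ^ (-ε - 1)))
        (𝓝[>] 0) (𝓝 (1 + β)) := by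
      simpa using (hc1.mul hεs).const_add (1 + β)
    refine (hnum.div hden (by linarith)).congr' ?_
    filter_upwards [hpos, hden.eventually_ne (show (1 - β) ≠ 0 by linarith)] with ε hε hne
    rw [Pi.div_apply, div_eq_iff hne]
    linarith [(hRf ε hε).2]
  have hL : 0 < Real.log ((1 + β) / (1 - β)) :=
    Real.log_pos (by rw [lt_div_iff₀ (by linarith)]; linarith)
  have hx : Tendsto (fun ε : ℝ => 1 + Rf ε) (𝓝[>] 0) atTop := by
    have hlogy := hy.log (div_pos (by linarith) (by linarith)).ne'
    refine (Real.tendsto_exp_atTop.comp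
      (hlogy.pos_mul_atTop hL tendsto_inv_nhdsGT_zero)).congr' ?_
    filter_upwards [hpos] with ε hε
    have h1 : 0 < 1 + Rf ε := by linarith [(hRf ε hε).1]
    rw [Function.comp_apply, Real.log_rpow h1, mul_comm ε, mul_assoc, mul_inv_cancel₀ hε.ne',
      mul_one, Real.exp_log h1]
  have hs : Tendsto (fun ε : ℝ => (1 + Rf ε) ^ (-ε - 1)) (𝓝[>] 0) (𝓝 0) := by
    refine squeeze_zero' ?_ ?_ hx.inv_tendsto_atTop
    · filter_upwards [hpos] with ε hε using hs0 ε hε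
    · filter_upwards [hpos] with ε hε using hsx ε hε
  have hmain : Tendsto (fun ε : ℝ => δ₀ * LottScale β δinf δ₀ ε (Rf ε) / (1 + Rf ε))
      (𝓝[>] 0) (𝓝 1) := by
    have h := ((hc1.mul hs).add (hc2.mul hy)).div_const (1 + β)
    have he : ((1 - β) * (δinf - 1) * 0 + (1 - β) * ((1 + β) / (1 - β))) / (1 + β) = 1 := by
      have h1 : 1 - β ≠ 0 := by linarith
      have h2 : 1 + β ≠ 0 := by linarith
      field_simp
      ring
    rw [he] at h
    refine h.congr' ?_
    filter_upwards [hpos] with ε hε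
    have h1 : 0 < 1 + Rf ε := by linarith [(hRf ε hε).1]
    have h2 : 1 + β ≠ 0 := by linarith
    rw [LottScale, Real.rpow_sub_one h1.ne', Real.rpow_add h1, Real.rpow_one]
    field_simp
  have hC : Tendsto (fun ε : ℝ => LottScale β δinf δ₀ ε (Rf ε)) (𝓝[>] 0) atTop := by
    -- `C = (δ₀ C / x) * (x / δ₀)`, a factor tending to `1` times one tending to `∞`.
    refine (hmain.pos_mul_atTop one_pos (hx.atTop_div_const hδ₀)).congr' ?_
    filter_upwards [hpos] with ε hε
    have h1 : 1 + Rf ε ≠ 0 := by linarith [(hRf ε hε).1]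
    field_simp
  exact ⟨hmain, hC, hC.eventually_gt_atTop 1⟩
end
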